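/- arXiv:2503.04494 — 5 statements merged into one kernel-verified Lean document; each statement's English description precedes it below -/
import Mathlib

section
/- Let A be a finite abelian group (written additively), let a ∈ A, let n be the additive order of a, and let Λ_{a/A} = (A × ℝ)/⟨(a,1)⟩. Then: (i) the homomorphism ι : ℝ → Λ_{a/A} given by ι(t) = ⟦(0,t)⟧ has kernel equal to the subgroup nℤ of ℝ generated by n; (ii) there is a homomorphism p : Λ_{a/A} → A/⟨a⟩ satisfying p(⟦(x,t)⟧) = x + ⟨a⟩ for all x ∈ A and t ∈ ℝ; (iii) p is surjective; and (iv) the kernel of p equals the range of ι. In other words, Λ_{a/A} sits in a short exact sequence 0 → ℝ/nℤ → Λ_{a/A} → A/⟨a⟩ → 0. -/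
/-- For a finite abelian group `A`, `a ∈ A` of additive order `n`, and
`Λ_{a/A} = (A × ℝ)/⟨(a,1)⟩`: the homomorphism `ι : ℝ → Λ_{a/A}`, `t ↦ ⟦(0,t)⟧`, has kernel
the subgroup `nℤ ⊆ ℝ`; there is a homomorphism `p : Λ_{a/A} → A/⟨a⟩` with
`p ⟦(x,t)⟧ = x + ⟨a⟩`, which is surjective with kernel equal to the range of `ι`.
That is, `0 → ℝ/nℤ → Λ_{a/A} → A/⟨a⟩ → 0` is short exact. -/
theorem stmt_0 {A : Type} [AddCommGroup A] [Fintype A] (a : A) :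
    ∃ (ι : ℝ →+ (A × ℝ) ⧸ AddSubgroup.zmultiples ((a, (1 : ℝ)) : A × ℝ))
      (p : ((A × ℝ) ⧸ AddSubgroup.zmultiples ((a, (1 : ℝ)) : A × ℝ)) →+
        A ⧸ AddSubgroup.zmultiples a),
      (∀ t : ℝ, ι t = QuotientAddGroup.mk ((0 : A), t)) ∧
      ι.ker = AddSubgroup.zmultiples ((addOrderOf a : ℝ)) ∧
      (∀ (x : A) (t : ℝ), p (QuotientAddGroup.mk (x, t)) = QuotientAddGroup.mk x) ∧
      Function.Surjective p ∧
      p.ker = ι.range := by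
  refine ⟨(QuotientAddGroup.mk' _).comp (AddMonoidHom.inr A ℝ),
    QuotientAddGroup.map _ _ (AddMonoidHom.fst A ℝ) ?_, fun _ => rfl, ?_, fun _ _ => rfl, ?_, ?_⟩
  · rw [AddSubgroup.zmultiples_le]
    exact AddSubgroup.mem_zmultiples a
  · ext t
    rw [AddMonoidHom.mem_ker, AddMonoidHom.comp_apply, QuotientAddGroup.mk'_apply,
      QuotientAddGroup.eq_zero_iff, AddSubgroup.mem_zmultiples_iff, AddSubgroup.mem_zmultiples_iff]
    constructor
    · rintro ⟨k, hk⟩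
      obtain ⟨hka, hkt⟩ := Prod.ext_iff.1 hk
      obtain ⟨m, rfl⟩ := addOrderOf_dvd_iff_zsmul_eq_zero.2 (show k • a = 0 from hka)
      refine ⟨m, ?_⟩
      rw [show t = _ from hkt.symm]
      simp [mul_comm]
    · rintro ⟨m, rfl⟩
      refine ⟨m * addOrderOf a, Prod.ext ?_ ?_⟩
      · simp [mul_zsmul]
      · simp
  · rintro ⟨x⟩
    exact ⟨QuotientAddGroup.mk (x, 0), rfl⟩
  · ext y
    rw [AddMonoidHom.mem_ker, AddMonoidHom.mem_range]
    constructor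
    · obtain ⟨⟨x, t⟩, rfl⟩ := QuotientAddGroup.mk_surjective y
      intro h
      obtain ⟨k, rfl⟩ := AddSubgroup.mem_zmultiples_iff.1 ((QuotientAddGroup.eq_zero_iff x).1 h)
      refine ⟨t - k, QuotientAddGroup.eq.2 (AddSubgroup.mem_zmultiples_iff.2 ⟨k, ?_⟩)⟩
      ext <;> simp
    · rintro ⟨t, rfl⟩
      rfl
end

section
/- Let A be a finite abelian group (written additively), let a ∈ A, and let Λ_{a/A} = (A × ℝ)/⟨(a,1)⟩, equipped with the quotient topology coming from the product topology on A × ℝ (where A carries the discrete topology and ℝ its usual topology). Then there is an isomorphism of topological groups Λ_{a/A} ≅ (ℝ/ℤ) × (A/⟨a⟩), i.e., an additive group isomorphism from Λ_{a/A} to the product of the circle group ℝ/ℤ with the finite quotient group A/⟨a⟩ that is simultaneously a homeomorphism. -/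
/-- A homomorphism into a divisible group may be prescribed on an element `a`, as long as the
order of `a` kills the prescribed value. -/
theorem exists_addMonoidHom_apply_eq_of_divisible {A Q : Type*} [AddCommGroup A] [AddCommGroup Q]
    [DivisibleBy Q ℤ] (a : A) (q : Q) (hq : addOrderOf a • q = 0) :
    ∃ χ : A →+ Q, χ a = q := by
  let f : ZMod (addOrderOf a) →+ A := ZMod.lift _ ⟨zmultiplesHom A a, by simp⟩
  let g : ZMod (addOrderOf a) →+ Q := ZMod.lift _ ⟨zmultiplesHom Q q, by simpa using hq⟩
  have hf : Function.Injective f := by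
    refine (ZMod.lift_injective _).2 fun m hm => ?_
    rw [ZMod.intCast_zmod_eq_zero_iff_dvd]
    exact addOrderOf_dvd_iff_zsmul_eq_zero.2 (by simpa using hm)
  obtain ⟨χ, hχ⟩ := (Module.Baer.of_divisible Q).extension_property_addMonoidHom f hf g
  refine ⟨χ, ?_⟩
  have h1 : f ((1 : ℤ) : ZMod (addOrderOf a)) = a := by
    simp only [f, ZMod.lift_coe]; simp
  have h2 : g ((1 : ℤ) : ZMod (addOrderOf a)) = q := by
    simp only [g, ZMod.lift_coe]; simp
  rw [← h2, ← hχ, AddMonoidHom.comp_apply, h1]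

/-- The quotient `(A × ℝ) ⧸ ⟨(a, 1)⟩` is the image of the compact set `A × [0, 1]`. -/
theorem compactSpace_prod_real_quotient_zmultiples {A : Type*} [AddCommGroup A]
    [TopologicalSpace A] [CompactSpace A] (a : A) :
    CompactSpace ((A × ℝ) ⧸ AddSubgroup.zmultiples ((a, (1 : ℝ)) : A × ℝ)) := by
  have hK : IsCompact ((Set.univ : Set A) ×ˢ Set.Icc (0 : ℝ) 1) :=
    isCompact_univ.prod isCompact_Icc
  refine ⟨(hK.image continuous_quotient_mk').of_isClosed_subset isClosed_univ ?_⟩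
  rintro y -
  obtain ⟨⟨x, t⟩, rfl⟩ := QuotientAddGroup.mk_surjective y
  refine ⟨(x - ⌊t⌋ • a, Int.fract t),
    ⟨Set.mem_univ _, Int.fract_nonneg t, (Int.fract_lt_one t).le⟩, ?_⟩
  refine QuotientAddGroup.eq.2 (AddSubgroup.mem_zmultiples_iff.2 ⟨⌊t⌋, ?_⟩)
  ext
  · simp
  · simp [neg_add_eq_sub]

/-- If `χ a = -1/n` with `n` the order of `a`, then `(x, t) ↦ (χ x + t/n, [x])` is a surjection
`A × ℝ → ℝ/ℤ × A/⟨a⟩` with kernel `⟨(a, 1)⟩`. -/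
theorem exists_continuous_surjective_ker_eq_zmultiples {A : Type*} [AddCommGroup A] [Finite A]
    [TopologicalSpace A] [DiscreteTopology A] (a : A) :
    ∃ F : A × ℝ →+ AddCircle (1 : ℝ) × (A ⧸ AddSubgroup.zmultiples a),
      Continuous F ∧ Function.Surjective F ∧
        F.ker = AddSubgroup.zmultiples ((a, (1 : ℝ)) : A × ℝ) := by
  have hn : (addOrderOf a : ℝ) ≠ 0 := Nat.cast_ne_zero.2 (addOrderOf_pos a).ne'
  obtain ⟨χ, hχ⟩ := exists_addMonoidHom_apply_eq_of_divisible a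
    ((-(addOrderOf a : ℝ)⁻¹ : ℝ) : AddCircle (1 : ℝ)) (by
      rw [← AddCircle.coe_nsmul, nsmul_eq_mul, mul_neg, mul_inv_cancel₀ hn, AddCircle.coe_neg,
        AddCircle.coe_period, neg_zero])
  let ψ : ℝ →+ AddCircle (1 : ℝ) :=
    (QuotientAddGroup.mk' _).comp (AddMonoidHom.mulRight (addOrderOf a : ℝ)⁻¹)
  have hψ (t : ℝ) : ψ t = ((t * (addOrderOf a : ℝ)⁻¹ : ℝ) : AddCircle (1 : ℝ)) := rfl
  have hψc : Continuous ψ :=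
    (AddCircle.continuous_mk' 1).comp (continuous_id.mul continuous_const)
  have hχψ (k : ℤ) : χ (k • a) = -ψ k := by
    rw [map_zsmul, hχ, hψ, ← AddCircle.coe_zsmul, ← AddCircle.coe_neg, zsmul_eq_mul, mul_neg]
  refine ⟨(χ.coprod ψ).prod ((QuotientAddGroup.mk' _).comp (AddMonoidHom.fst A ℝ)), ?_, ?_, ?_⟩
  · refine Continuous.prodMk ?_ ?_
    · exact (continuous_of_discreteTopology.comp continuous_fst).add (hψc.comp continuous_snd)
    · exact continuous_quotient_mk'.comp continuous_fst
  · rintro ⟨c, y⟩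
    obtain ⟨x, rfl⟩ := QuotientAddGroup.mk_surjective y
    obtain ⟨s, hs⟩ := QuotientAddGroup.mk_surjective (c - χ x)
    refine ⟨(x, s * addOrderOf a), Prod.ext ?_ rfl⟩
    change χ x + ψ (s * addOrderOf a) = c
    rw [hψ, mul_inv_cancel_right₀ hn]
    exact (congrArg (χ x + ·) hs).trans (add_sub_cancel _ _)
  · ext ⟨x, t⟩
    have hker : (x, t) ∈ ((χ.coprod ψ).prod ((QuotientAddGroup.mk' (AddSubgroup.zmultiples a)).comp
        (AddMonoidHom.fst A ℝ))).ker ↔ χ x + ψ t = 0 ∧ x ∈ AddSubgroup.zmultiples a := by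
      rw [AddMonoidHom.mem_ker, ← QuotientAddGroup.eq_zero_iff x]
      exact Prod.ext_iff
    rw [hker, AddSubgroup.mem_zmultiples_iff, AddSubgroup.mem_zmultiples_iff]
    constructor
    · rintro ⟨h, k, rfl⟩
      rw [hχψ, neg_add_eq_sub, ← map_sub, hψ, AddCircle.coe_eq_zero_iff] at h
      obtain ⟨m, hm⟩ := h
      rw [zsmul_eq_mul, mul_one, eq_mul_inv_iff_mul_eq₀ hn] at hm
      refine ⟨k + m * addOrderOf a, Prod.ext ?_ ?_⟩
      · simp [add_zsmul, mul_zsmul]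
      · simp [hm]
    · rintro ⟨k, hk⟩
      obtain ⟨rfl, rfl⟩ := Prod.ext_iff.1 hk
      refine ⟨?_, k, rfl⟩
      simp [hχψ]

/-- For a finite abelian group `A` (with the discrete topology) and `a ∈ A`,
the group `Λ_{a/A} = (A × ℝ)/⟨(a,1)⟩` with the quotient topology is isomorphic, as a
topological group, to `(ℝ/ℤ) × (A/⟨a⟩)`: there is an additive group isomorphism that is
continuous with continuous inverse. -/
theorem stmt_1 {A : Type} [AddCommGroup A] [Fintype A] [TopologicalSpace A]
    [DiscreteTopology A] (a : A) :
    ∃ e : ((A × ℝ) ⧸ AddSubgroup.zmultiples ((a, (1 : ℝ)) : A × ℝ)) ≃+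
        (AddCircle (1 : ℝ)) × (A ⧸ AddSubgroup.zmultiples a),
      Continuous e ∧ Continuous e.symm := by
  obtain ⟨F, hFc, hFs, hFk⟩ := exists_continuous_surjective_ker_eq_zmultiples a
  have := compactSpace_prod_real_quotient_zmultiples a
  let e : ((A × ℝ) ⧸ AddSubgroup.zmultiples ((a, (1 : ℝ)) : A × ℝ)) ≃+
      (AddCircle (1 : ℝ)) × (A ⧸ AddSubgroup.zmultiples a) :=
    (QuotientAddGroup.quotientAddEquivOfEq hFk.symm).trans
      (QuotientAddGroup.quotientKerEquivOfSurjective F hFs)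
  have he : Continuous e := isQuotientMap_quotient_mk'.continuous_iff.2 hFc
  exact ⟨e, he, he.continuous_symm_of_equiv_compact_to_t2 (f := e.toEquiv)⟩
end

section
/- Let A be a finite abelian group (written additively), let a ∈ A, let n be the additive order of a, and let Λ_{a/A} = (A × ℝ)/⟨(a,1)⟩. Then: (i) the assignment A × ℝ → Λ_{a/A}, (x,t) ↦ ⟦(x, n·t)⟧ satisfies ⟦(x, n·(t+1))⟧ = ⟦(x, n·t)⟧ for all x ∈ A and t ∈ ℝ, and hence descends to a well-defined homomorphism q : A × (ℝ/ℤ) → Λ_{a/A} with q(x, t + ℤ) = ⟦(x, n·t)⟧; (ii) q is surjective; (iii) the kernel of q is the cyclic subgroup of A × (ℝ/ℤ) generated by the element (a, (1/n) + ℤ); and (iv) this element (a, (1/n) + ℤ) has additive order exactly n. In other words, Λ_{a/A} sits in a short exact sequence 0 → ℤ/n → A × (ℝ/ℤ) → Λ_{a/A} → 0. -/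
/-- The quotient `(A × ℝ) / ⟨(a, 1)⟩` identifies `(0, n)` with `0`, where `n` is the additive
order of `a`. -/
theorem mk_zero_addOrderOf_eq_zero {A : Type*} [AddCommGroup A] (a : A) :
    (QuotientAddGroup.mk (0, (addOrderOf a : ℝ)) :
      (A × ℝ) ⧸ AddSubgroup.zmultiples ((a, (1 : ℝ)) : A × ℝ)) = 0 := by
  rw [QuotientAddGroup.eq_zero_iff, AddSubgroup.mem_zmultiples_iff]
  exact ⟨addOrderOf a, by simp [addOrderOf_nsmul_eq_zero]⟩

/-- The homomorphism `A × ℝ/ℤ → (A × ℝ) / ⟨(a, 1)⟩` sending `(x, t + ℤ)` to `⟦(x, n * t)⟧`, where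
`n` is the additive order of `a`. -/
noncomputable def prodCircleToQuotient {A : Type*} [AddCommGroup A] (a : A) :
    (A × AddCircle (1 : ℝ)) →+ (A × ℝ) ⧸ AddSubgroup.zmultiples ((a, (1 : ℝ)) : A × ℝ) :=
  AddMonoidHom.coprod ((QuotientAddGroup.mk' _).comp (AddMonoidHom.inl A ℝ))
    (QuotientAddGroup.lift (AddSubgroup.zmultiples (1 : ℝ))
      ((QuotientAddGroup.mk' _).comp
        ((AddMonoidHom.inr A ℝ).comp (AddMonoidHom.mulLeft (addOrderOf a : ℝ))))
      (by
        rw [AddSubgroup.zmultiples_le]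
        simpa [AddMonoidHom.mem_ker] using mk_zero_addOrderOf_eq_zero a))

theorem prodCircleToQuotient_coe {A : Type*} [AddCommGroup A] (a x : A) (t : ℝ) :
    prodCircleToQuotient a (x, (t : AddCircle (1 : ℝ))) =
      QuotientAddGroup.mk (x, (addOrderOf a : ℝ) * t) := by
  change (QuotientAddGroup.mk (x, (0 : ℝ)) + QuotientAddGroup.mk (0, (addOrderOf a : ℝ) * t) :
    (A × ℝ) ⧸ AddSubgroup.zmultiples ((a, (1 : ℝ)) : A × ℝ)) = _
  rw [← QuotientAddGroup.mk_add]
  simp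

theorem prodCircleToQuotient_surjective {A : Type*} [AddCommGroup A] {a : A}
    (ha : IsOfFinAddOrder a) : Function.Surjective (prodCircleToQuotient a) := by
  have hn : (addOrderOf a : ℝ) ≠ 0 := by exact_mod_cast ha.addOrderOf_pos.ne'
  intro y
  obtain ⟨⟨x, t⟩, rfl⟩ := QuotientAddGroup.mk_surjective y
  exact ⟨(x, ((t / addOrderOf a : ℝ) : AddCircle (1 : ℝ))), by
    rw [prodCircleToQuotient_coe, mul_div_cancel₀ _ hn]⟩

theorem ker_prodCircleToQuotient {A : Type*} [AddCommGroup A] {a : A}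
    (ha : IsOfFinAddOrder a) :
    (prodCircleToQuotient a).ker = AddSubgroup.zmultiples
      ((a, ((1 / (addOrderOf a : ℝ) : ℝ) : AddCircle (1 : ℝ))) : A × AddCircle (1 : ℝ)) := by
  have hn : (addOrderOf a : ℝ) ≠ 0 := by exact_mod_cast ha.addOrderOf_pos.ne'
  apply le_antisymm
  · rintro ⟨x, s⟩ h
    obtain ⟨t, rfl⟩ := QuotientAddGroup.mk_surjective s
    rw [AddMonoidHom.mem_ker, prodCircleToQuotient_coe, QuotientAddGroup.eq_zero_iff,
      AddSubgroup.mem_zmultiples_iff] at h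
    obtain ⟨k, hk⟩ := h
    simp only [Prod.smul_mk, Prod.mk.injEq, zsmul_eq_mul, mul_one] at hk
    obtain ⟨hx, ht⟩ := hk
    refine AddSubgroup.mem_zmultiples_iff.mpr ⟨k, Prod.ext hx ?_⟩
    have hkt : k • (1 / (addOrderOf a : ℝ)) = t := by
      rw [zsmul_eq_mul, ht]
      field_simp
    exact congrArg (fun r : ℝ => (r : AddCircle (1 : ℝ))) hkt
  · rw [AddSubgroup.zmultiples_le, AddMonoidHom.mem_ker, prodCircleToQuotient_coe,
      mul_one_div_cancel hn, QuotientAddGroup.eq_zero_iff]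
    exact AddSubgroup.mem_zmultiples _

theorem addOrderOf_prod_one_div_addOrderOf {A : Type*} [AddCommGroup A] {a : A}
    (ha : IsOfFinAddOrder a) :
    addOrderOf ((a, ((1 / (addOrderOf a : ℝ) : ℝ) : AddCircle (1 : ℝ))) :
      A × AddCircle (1 : ℝ)) = addOrderOf a := by
  rw [Prod.addOrderOf, AddCircle.addOrderOf_period_div ha.addOrderOf_pos, Nat.lcm_self]

/-- For a finite abelian group `A`, `a ∈ A` of additive order `n`, and
`Λ_{a/A} = (A × ℝ)/⟨(a,1)⟩`: (i) `⟦(x, n·(t+1))⟧ = ⟦(x, n·t)⟧`, so `(x, t + ℤ) ↦ ⟦(x, n·t)⟧`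
descends to a well-defined homomorphism `q : A × (ℝ/ℤ) → Λ_{a/A}`; (ii) `q` is surjective;
(iii) the kernel of `q` is the cyclic subgroup generated by `(a, 1/n + ℤ)`; and (iv) this
element has additive order exactly `n`. That is, `0 → ℤ/n → A × (ℝ/ℤ) → Λ_{a/A} → 0` is
short exact. -/
theorem stmt_2 {A : Type} [AddCommGroup A] [Fintype A] (a : A) :
    (∀ (x : A) (t : ℝ),
      (QuotientAddGroup.mk (x, (addOrderOf a : ℝ) * (t + 1)) :
        (A × ℝ) ⧸ AddSubgroup.zmultiples ((a, (1 : ℝ)) : A × ℝ)) =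
      QuotientAddGroup.mk (x, (addOrderOf a : ℝ) * t)) ∧
    ∃ q : (A × AddCircle (1 : ℝ)) →+
        (A × ℝ) ⧸ AddSubgroup.zmultiples ((a, (1 : ℝ)) : A × ℝ),
      (∀ (x : A) (t : ℝ), q (x, (t : AddCircle (1 : ℝ))) =
        QuotientAddGroup.mk (x, (addOrderOf a : ℝ) * t)) ∧
      Function.Surjective q ∧
      q.ker = AddSubgroup.zmultiples
        ((a, ((1 / (addOrderOf a : ℝ) : ℝ) : AddCircle (1 : ℝ))) : A × AddCircle (1 : ℝ)) ∧
      addOrderOf ((a, ((1 / (addOrderOf a : ℝ) : ℝ) : AddCircle (1 : ℝ))) :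
        A × AddCircle (1 : ℝ)) = addOrderOf a := by
  have ha : IsOfFinAddOrder a := isOfFinAddOrder_of_finite a
  refine ⟨fun x t => ?_, prodCircleToQuotient a, prodCircleToQuotient_coe a,
    prodCircleToQuotient_surjective ha, ker_prodCircleToQuotient ha,
    addOrderOf_prod_one_div_addOrderOf ha⟩
  rw [← prodCircleToQuotient_coe, ← prodCircleToQuotient_coe, AddCircle.coe_add,
    AddCircle.coe_period, add_zero]
end

section
/- Let f : A → A' be a homomorphism of finite abelian groups (written additively), let a ∈ A, and set a' = f(a). Let n and n' be the additive orders of a and a' respectively, and let Λ_{a/A} = (A × ℝ)/⟨(a,1)⟩ and Λ_{a'/A'} = (A' × ℝ)/⟨(a',1)⟩. Then: (i) n' divides n; (ii) the homomorphism A × ℝ → A' × ℝ, (x,t) ↦ (f(x), t), maps the subgroup ⟨(a,1)⟩ into the subgroup ⟨(a',1)⟩, and hence induces a homomorphism F : Λ_{a/A} → Λ_{a'/A'} with F(⟦(x,t)⟧) = ⟦(f(x), t)⟧; and (iii) writing m = n/n' and letting q : A × (ℝ/ℤ) → Λ_{a/A} and q' : A' × (ℝ/ℤ) → Λ_{a'/A'}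 denote the surjections q(x, t+ℤ) = ⟦(x, n·t)⟧ and q'(x', t+ℤ) = ⟦(x', n'·t)⟧, one has F ∘ q = q' ∘ (f × m·(−)), where f × m·(−) : A × (ℝ/ℤ) → A' × (ℝ/ℤ) sends (x, u) to (f(x), m·u). In particular F is the homomorphism induced on quotients by (f, m·(−)) : A × (ℝ/ℤ) → A' × (ℝ/ℤ). -/
/-- Let `f : A → A'` be a homomorphism of finite abelian groups, `a ∈ A`,
`a' = f a`, with additive orders `n`, `n'`. Then: (i) `n' ∣ n`; (ii) `(x,t) ↦ (f x, t)`
maps `⟨(a,1)⟩` into `⟨(a',1)⟩` and hence induces `F : Λ_{a/A} → Λ_{a'/A'}` with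
`F ⟦(x,t)⟧ = ⟦(f x, t)⟧`; and (iii) with `m = n / n'` and the surjections
`q : A × (ℝ/ℤ) → Λ_{a/A}`, `q' : A' × (ℝ/ℤ) → Λ_{a'/A'}` given by
`q (x, t+ℤ) = ⟦(x, n·t)⟧` and `q' (x', t+ℤ) = ⟦(x', n'·t)⟧`, one has
`F (q (x, u)) = q' (f x, m • u)` for all `x`, `u`. -/
theorem stmt_4 {A A' : Type} [AddCommGroup A] [Fintype A] [AddCommGroup A'] [Fintype A']
    (f : A →+ A') (a : A)
    (q : (A × AddCircle (1 : ℝ)) →+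
      (A × ℝ) ⧸ AddSubgroup.zmultiples ((a, (1 : ℝ)) : A × ℝ))
    (hq : ∀ (x : A) (t : ℝ), q (x, (t : AddCircle (1 : ℝ))) =
      QuotientAddGroup.mk (x, (addOrderOf a : ℝ) * t))
    (q' : (A' × AddCircle (1 : ℝ)) →+
      (A' × ℝ) ⧸ AddSubgroup.zmultiples ((f a, (1 : ℝ)) : A' × ℝ))
    (hq' : ∀ (x' : A') (t : ℝ), q' (x', (t : AddCircle (1 : ℝ))) =
      QuotientAddGroup.mk (x', (addOrderOf (f a) : ℝ) * t)) :
    addOrderOf (f a) ∣ addOrderOf a ∧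
    (AddSubgroup.zmultiples ((a, (1 : ℝ)) : A × ℝ)).map
        (f.prodMap (AddMonoidHom.id ℝ)) ≤
      AddSubgroup.zmultiples ((f a, (1 : ℝ)) : A' × ℝ) ∧
    ∃ F : ((A × ℝ) ⧸ AddSubgroup.zmultiples ((a, (1 : ℝ)) : A × ℝ)) →+
        ((A' × ℝ) ⧸ AddSubgroup.zmultiples ((f a, (1 : ℝ)) : A' × ℝ)),
      (∀ (x : A) (t : ℝ), F (QuotientAddGroup.mk (x, t)) = QuotientAddGroup.mk (f x, t)) ∧
      ∀ (x : A) (u : AddCircle (1 : ℝ)),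
        F (q (x, u)) = q' (f x, (addOrderOf a / addOrderOf (f a)) • u) := by
  have hdvd : addOrderOf (f a) ∣ addOrderOf a := addOrderOf_map_dvd f a
  have hmap : (AddSubgroup.zmultiples ((a, (1 : ℝ)) : A × ℝ)).map
      (f.prodMap (AddMonoidHom.id ℝ)) ≤ AddSubgroup.zmultiples ((f a, (1 : ℝ)) : A' × ℝ) := by
    rw [AddMonoidHom.map_zmultiples]
    exact le_rfl
  refine ⟨hdvd, hmap, QuotientAddGroup.map _ _ (f.prodMap (AddMonoidHom.id ℝ))
    (AddSubgroup.map_le_iff_le_comap.mp hmap), fun x t => rfl, fun x u => ?_⟩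
  induction u using QuotientAddGroup.induction_on with
  | H t =>
    have hmul : (addOrderOf (f a) : ℝ) * ((addOrderOf a / addOrderOf (f a)) • t) =
        addOrderOf a * t := by
      rw [nsmul_eq_mul, ← mul_assoc, ← Nat.cast_mul, Nat.mul_div_cancel' hdvd]
    rw [hq, ← AddCircle.coe_nsmul, hq', hmul]
    rfl
end

section
/- Let A and A' be finite abelian groups (written additively), let a ∈ A and a' ∈ A', and consider the Ganter–Rezk–Huan groups Λ_{a/A} = (A × ℝ)/⟨(a,1)⟩, Λ_{a'/A'} = (A' × ℝ)/⟨(a',1)⟩ and Λ_{(a,a')/(A×A')} = ((A × A') × ℝ)/⟨((a,a'),1)⟩. Let r : Λ_{a/A} → ℝ/ℤ and r' : Λ_{a'/A'} → ℝ/ℤ denote the homomorphisms determined by r(⟦(x,t)⟧) = t + ℤ and r'(⟦(x',t)⟧) = t + ℤ. Then the assignment ⟦((x,x'),t)⟧ ↦ (⟦(x,t)⟧, ⟦(x',t)⟧) is a well-defined injective group homomorphism Λ_{(a,a')/(A×A')} → Λ_{a/A} × Λ_{a'/A'}, and its range is exactly the fibre product {(u,v) ∈ Λ_{a/A} × Λ_{a'/A'}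 : r(u) = r'(v)}. In other words, Λ_{(a,a')/(A×A')} is isomorphic to the fibre product Λ_{a/A} ×_{ℝ/ℤ} Λ_{a'/A'}. (This is the group-theoretic content of the statement that cyclification satisfies Cyc(BA × BA') ≃ Cyc(BA) ×_{BT} Cyc(BA').) -/
/-- For finite abelian groups `A`, `A'`, `a ∈ A`, `a' ∈ A'`, and the
homomorphisms `r : Λ_{a/A} → ℝ/ℤ`, `r' : Λ_{a'/A'} → ℝ/ℤ` with `r ⟦(x,t)⟧ = t + ℤ`,
`r' ⟦(x',t)⟧ = t + ℤ`, the assignment `⟦((x,x'),t)⟧ ↦ (⟦(x,t)⟧, ⟦(x',t)⟧)` is a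
well-defined injective homomorphism `Λ_{(a,a')/(A×A')} → Λ_{a/A} × Λ_{a'/A'}` whose range
is exactly the fibre product `{(u,v) : r u = r' v}`; i.e.
`Λ_{(a,a')/(A×A')} ≅ Λ_{a/A} ×_{ℝ/ℤ} Λ_{a'/A'}`. -/
theorem stmt_5 {A A' : Type} [AddCommGroup A] [Fintype A] [AddCommGroup A'] [Fintype A']
    (a : A) (a' : A')
    (r : ((A × ℝ) ⧸ AddSubgroup.zmultiples ((a, (1 : ℝ)) : A × ℝ)) →+ AddCircle (1 : ℝ))
    (hr : ∀ (x : A) (t : ℝ), r (QuotientAddGroup.mk (x, t)) = (t : AddCircle (1 : ℝ)))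
    (r' : ((A' × ℝ) ⧸ AddSubgroup.zmultiples ((a', (1 : ℝ)) : A' × ℝ)) →+ AddCircle (1 : ℝ))
    (hr' : ∀ (x' : A') (t : ℝ), r' (QuotientAddGroup.mk (x', t)) = (t : AddCircle (1 : ℝ))) :
    ∃ Φ : (((A × A') × ℝ) ⧸ AddSubgroup.zmultiples (((a, a'), (1 : ℝ)) : (A × A') × ℝ)) →+
        ((A × ℝ) ⧸ AddSubgroup.zmultiples ((a, (1 : ℝ)) : A × ℝ)) ×
        ((A' × ℝ) ⧸ AddSubgroup.zmultiples ((a', (1 : ℝ)) : A' × ℝ)),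
      (∀ (x : A) (x' : A') (t : ℝ),
        Φ (QuotientAddGroup.mk ((x, x'), t)) =
          (QuotientAddGroup.mk (x, t), QuotientAddGroup.mk (x', t))) ∧
      Function.Injective Φ ∧
      Set.range Φ = {w | r w.1 = r' w.2} := by
  let p : (A × A') × ℝ →+ A × ℝ := (AddMonoidHom.fst A A').prodMap (AddMonoidHom.id ℝ)
  let p' : (A × A') × ℝ →+ A' × ℝ := (AddMonoidHom.snd A A').prodMap (AddMonoidHom.id ℝ)
  let f := ((QuotientAddGroup.mk' (AddSubgroup.zmultiples ((a, (1 : ℝ)) : A × ℝ))).comp p).prod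
    ((QuotientAddGroup.mk' (AddSubgroup.zmultiples ((a', (1 : ℝ)) : A' × ℝ))).comp p')
  have hf : AddSubgroup.zmultiples (((a, a'), (1 : ℝ)) : (A × A') × ℝ) ≤ f.ker := by
    rw [AddSubgroup.zmultiples_le, AddMonoidHom.mem_ker]
    exact Prod.ext
      ((QuotientAddGroup.eq_zero_iff _).2 (AddSubgroup.mem_zmultiples ((a, (1 : ℝ)) : A × ℝ)))
      ((QuotientAddGroup.eq_zero_iff _).2 (AddSubgroup.mem_zmultiples ((a', (1 : ℝ)) : A' × ℝ)))
  have hΦ : ∀ (x : A) (x' : A') (t : ℝ),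
      QuotientAddGroup.lift _ f hf (QuotientAddGroup.mk ((x, x'), t)) =
        (QuotientAddGroup.mk (x, t), QuotientAddGroup.mk (x', t)) := fun _ _ _ => rfl
  refine ⟨QuotientAddGroup.lift _ f hf, hΦ, ?_, ?_⟩
  · rw [injective_iff_map_eq_zero]
    intro q
    induction q using QuotientAddGroup.induction_on with
    | H z =>
      obtain ⟨⟨x, x'⟩, t⟩ := z
      intro hq
      rw [hΦ, Prod.mk_eq_zero, QuotientAddGroup.eq_zero_iff, QuotientAddGroup.eq_zero_iff,
        AddSubgroup.mem_zmultiples_iff, AddSubgroup.mem_zmultiples_iff] at hq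
      obtain ⟨⟨n, hn⟩, m, hm⟩ := hq
      simp only [Prod.smul_mk, Prod.mk.injEq, zsmul_eq_mul, mul_one] at hn hm
      obtain rfl : n = m := by exact_mod_cast hn.2.trans hm.2.symm
      rw [QuotientAddGroup.eq_zero_iff, AddSubgroup.mem_zmultiples_iff]
      exact ⟨n, by simp [hn.1, hn.2, hm.1]⟩
  · ext ⟨u, v⟩
    constructor
    · rintro ⟨q, hq⟩
      induction q using QuotientAddGroup.induction_on with
      | H z =>
        obtain ⟨⟨x, x'⟩, t⟩ := z
        rw [hΦ, Prod.mk.injEq] at hq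
        obtain ⟨rfl, rfl⟩ := hq
        exact (hr x t).trans (hr' x' t).symm
    · induction u using QuotientAddGroup.induction_on with
      | H y =>
      induction v using QuotientAddGroup.induction_on with
      | H y' =>
        obtain ⟨x, t⟩ := y
        obtain ⟨x', s⟩ := y'
        intro h
        have hts : (t : AddCircle (1 : ℝ)) = s := (hr x t).symm.trans (Eq.trans h (hr' x' s))
        obtain ⟨n, hn⟩ := AddSubgroup.mem_zmultiples_iff.1 (QuotientAddGroup.eq.1 hts)
        refine ⟨QuotientAddGroup.mk ((x, x' - n • a'), t), ?_⟩
        rw [hΦ, Prod.mk.injEq, QuotientAddGroup.eq (s := AddSubgroup.zmultiples (a', (1 : ℝ))),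
          AddSubgroup.mem_zmultiples_iff]
        exact ⟨rfl, n, Prod.ext (by simp) hn⟩
end
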